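/- (8/3)·Im Li₃((1+i)/2) − (4/9)·Im Li₃((1+i)/4) + Im Li₃(−i/2) + (π log²2)/24 = π³/32. (Equivalently, β(3) = π³/32 is expressed through the imaginary parts of trilogarithms at points with z⁸ = 1/16^p, p = 1, 3.) -/

import Mathlib

/-!
The identity is the value at one point of a functional equation for the trilogarithm, a
specialization of the Spence-Kummer equation. Spence-Kummer with `(x, y) = (z², z)` and the Landen
and duplication formulas relate `Li₃` at `z / (1 + z)²`, `z³`, `z`, `-z`, `-z² / (1 + z)` and
`-z (1 + z)`. Put `z = -c̄` with `Re c = 1/2`, so that `1 - c = c̄`. Then `-z (1 + z) = |c|²` is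
real, and `z / (1 + z)²` is the inverse of `-c² / c̄`, the conjugate of `-z² / (1 + z)`. Taking
imaginary parts leaves, with `c = exp (L + iθ)`, `L = -log (2 cos θ)` and `v = -c² / c̄`,

  `3 Im Li₃ v - Im Li₃ (-c³) + 9 Im Li₃ (-c) + 6 Im Li₃ c = (3/2) L² θ + (7/2) θ³ - (π²/2) θ`

for `0 < θ ≤ π/3` (`trilog_im`), where all arguments lie in the closed unit disk.

It is proved by differentiation in `θ`. Along the curve `dL/dθ = tan θ`, and the logarithmic
derivatives of `v`, `-c³`, `±c` are `tan θ + 3i`, `3 (tan θ + i)` and `tan θ + i`. So the derivative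
of the left side is `tan θ` times a combination of `Im Li₂` plus a combination of `Re Li₂`. These
two combinations are elementary (`dilog_im`, `dilog_re`), by a second differentiation, because
`1 + c³ = (1 + c) q` and `1 - v = q / c̄` with `q = 1 - c + c²` a positive real. The constants of
integration come from `θ = π/3`: there `v = -c³ = 1` and `±c` are roots of unity, so the values are
Bernoulli polynomials, or follow from the duplication formula.

At `θ = π/4` one has `c = (1 + i)/2`, `v = (1 - i)/2` and `-c³ = (1 - i)/4`. Duplication at `c`,
where `c² = i/2`, replaces `Li₃ (-c)` by `Li₃ c` and the conjugate of `Li₃ (-i/2)`.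
-/

open Complex

/-- The polylogarithm `Li n z = ∑_{k ≥ 1} z^k / k^n`. -/
noncomputable def Li (n : ℕ) (z : ℂ) : ℂ := ∑' k : ℕ, z ^ (k + 1) / ((k + 1 : ℕ) : ℂ) ^ n

/-! ### Polylogarithms on the unit disk -/

lemma hasSum_of_eq {M : Type*} [AddCommMonoid M] [TopologicalSpace M] {f g : ℕ → M} {a : M}
    (h : HasSum g a) (e : ∀ k, f k = g k) : HasSum f a := by
  rwa [funext e]

lemma Li_conj (n : ℕ) (z : ℂ) : Li n (starRingEnd ℂ z) = starRingEnd ℂ (Li n z) := by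
  simp only [Li, conj_tsum, map_div₀, map_pow, map_natCast]

lemma Li_one {z : ℂ} (hz : ‖z‖ < 1) : Li 1 z = -log (1 - z) := by
  have h := (hasSum_nat_add_iff' 1).mpr (hasSum_taylorSeries_neg_log hz)
  simp only [Finset.range_one, Finset.sum_singleton, pow_zero, Nat.cast_zero, div_zero,
    sub_zero] at h
  simpa [Li] using h.tsum_eq

lemma norm_Li_term_le (n : ℕ) {z : ℂ} (hz : ‖z‖ ≤ 1) (k : ℕ) :
    ‖z ^ (k + 1) / ((k + 1 : ℕ) : ℂ) ^ n‖ ≤ 1 / ((k + 1 : ℕ) : ℝ) ^ n := by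
  rw [norm_div, norm_pow, norm_pow, Complex.norm_natCast]
  gcongr
  exact pow_le_one₀ (norm_nonneg z) hz

lemma summable_Li_bound {n : ℕ} (hn : 1 < n) :
    Summable fun k : ℕ => 1 / ((k + 1 : ℕ) : ℝ) ^ n :=
  (summable_nat_add_iff 1).mpr (Real.summable_one_div_nat_pow.mpr hn)

lemma hasSum_Li {n : ℕ} (hn : 1 < n) {z : ℂ} (hz : ‖z‖ ≤ 1) :
    HasSum (fun k : ℕ => z ^ (k + 1) / ((k + 1 : ℕ) : ℂ) ^ n) (Li n z) :=
  (Summable.of_norm_bounded (summable_Li_bound hn) (norm_Li_term_le n hz)).hasSum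

lemma continuousOn_Li {n : ℕ} (hn : 1 < n) : ContinuousOn (Li n) {z | ‖z‖ ≤ 1} :=
  continuousOn_tsum (fun k => by fun_prop) (summable_Li_bound hn)
    (fun k _ hz => norm_Li_term_le n hz k)

/-- Termwise differentiation on a ball of radius `r` strictly between `‖z‖` and `1`, where the
differentiated series is dominated by a geometric one. -/
lemma hasDerivAt_Li (n : ℕ) {z : ℂ} (hz : ‖z‖ < 1) (h0 : z ≠ 0) :
    HasDerivAt (Li (n + 1)) (Li n z / z) z := by
  obtain ⟨r, hzr, hr⟩ := exists_between hz
  have hr0 : 0 ≤ r := (norm_nonneg z).trans hzr.le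
  have key := hasDerivAt_tsum_of_isPreconnected
    (g := fun (k : ℕ) (y : ℂ) => y ^ (k + 1) / ((k + 1 : ℕ) : ℂ) ^ (n + 1))
    (g' := fun (k : ℕ) (y : ℂ) => y ^ k / ((k + 1 : ℕ) : ℂ) ^ n)
    (t := Metric.ball 0 r) (u := fun k => r ^ k) (y₀ := 0) (y := z)
    (summable_geometric_of_lt_one hr0 hr) Metric.isOpen_ball
    (convex_ball (0 : ℂ) r).isPreconnected ?_ ?_ ?_ ?_ ?_
  · refine key.congr_deriv ?_
    rw [Li, ← tsum_div_const]
    refine tsum_congr fun k => ?_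
    have : ((k + 1 : ℕ) : ℂ) ^ n ≠ 0 := pow_ne_zero _ (Nat.cast_ne_zero.mpr k.succ_ne_zero)
    field_simp
    ring
  · intro k y _
    have := (hasDerivAt_pow (k + 1) y).div_const (((k + 1 : ℕ) : ℂ) ^ (n + 1))
    refine this.congr_deriv ?_
    have : ((k + 1 : ℕ) : ℂ) ≠ 0 := Nat.cast_ne_zero.mpr k.succ_ne_zero
    rw [Nat.add_sub_cancel, pow_succ]
    field_simp
  · intro k y hy
    rw [mem_ball_zero_iff] at hy
    rw [norm_div, norm_pow, norm_pow, Complex.norm_natCast]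
    refine (div_le_self (by positivity) (one_le_pow₀ ?_)).trans ?_
    · exact_mod_cast Nat.succ_le_succ k.zero_le
    · gcongr
  · simpa using (norm_nonneg z).trans_lt hzr
  · simp
  · simpa using hzr

/-- Derivative of a polylogarithm along a curve `w` in the punctured unit disk; `m` is the
logarithmic derivative of `w`. -/
lemma hasDerivAt_Li_curve (n : ℕ) {w : ℝ → ℂ} {m : ℂ} {t : ℝ} (hw : HasDerivAt w (w t * m) t)
    (h1 : ‖w t‖ < 1) (h0 : w t ≠ 0) :
    HasDerivAt (fun s => Li (n + 1) (w s)) (Li n (w t) * m) t := by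
  have := (hasDerivAt_Li n h1 h0).comp t hw
  refine this.congr_deriv ?_
  field_simp

lemma hasDerivAt_re_curve {f : ℝ → ℂ} {f' : ℂ} {t : ℝ} (h : HasDerivAt f f' t) :
    HasDerivAt (fun s => (f s).re) f'.re t :=
  reCLM.hasFDerivAt.comp_hasDerivAt t h

lemma hasDerivAt_im_curve {f : ℝ → ℂ} {f' : ℂ} {t : ℝ} (h : HasDerivAt f f' t) :
    HasDerivAt (fun s => (f s).im) f'.im t :=
  imCLM.hasFDerivAt.comp_hasDerivAt t h

/-- The duplication formula: odd powers cancel in `Li z + Li (-z)`. -/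
lemma Li_sq (n : ℕ) {z : ℂ} (hz : ‖z‖ ≤ 1) :
    Li (n + 2) (z ^ 2) = 2 ^ (n + 1) * (Li (n + 2) z + Li (n + 2) (-z)) := by
  have h1 := (hasSum_Li (n := n + 2) (by lia) hz).add
    (hasSum_Li (n := n + 2) (z := -z) (by lia) (by simpa using hz))
  have h2 := hasSum_Li (n := n + 2) (z := z ^ 2) (by lia)
    (by rw [norm_pow]; exact pow_le_one₀ (norm_nonneg z) hz)
  have h3 := (h2.div_const (2 ^ (n + 1) : ℂ))
  have h0 : HasSum (fun k : ℕ => z ^ (2 * k + 1) / ((2 * k + 1 : ℕ) : ℂ) ^ (n + 2)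
      + (-z) ^ (2 * k + 1) / ((2 * k + 1 : ℕ) : ℂ) ^ (n + 2)) 0 := by
    refine hasSum_of_eq hasSum_zero fun k => ?_
    rw [Odd.neg_pow ⟨k, rfl⟩]
    ring
  have h4 := HasSum.even_add_odd h0 (f := fun k : ℕ => z ^ (k + 1) / ((k + 1 : ℕ) : ℂ) ^ (n + 2)
      + (-z) ^ (k + 1) / ((k + 1 : ℕ) : ℂ) ^ (n + 2)) (m' := Li (n + 2) (z ^ 2) / 2 ^ (n + 1)) (by
    refine hasSum_of_eq h3 fun k => ?_
    have e : (2 * k + 1 + 1) = 2 * (k + 1) := by ring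
    have : ((k + 1 : ℕ) : ℂ) ≠ 0 := Nat.cast_ne_zero.mpr k.succ_ne_zero
    rw [e, Even.neg_pow ⟨k + 1, by ring⟩, pow_mul, Nat.cast_mul, mul_pow]
    push_cast at this ⊢
    field_simp
    ring)
  have := h1.unique h4
  rw [this]
  field_simp
  ring

/-- On the unit circle `Re Li₂` is the Fourier series of the Bernoulli polynomial `B₂`. -/
lemma Li_two_re_circle {x : ℝ} (hx : x ∈ Set.Icc (0 : ℝ) 1) {z : ℂ}
    (hz : z = exp (2 * Real.pi * x * I)) :
    (Li 2 z).re = Real.pi ^ 2 * (x ^ 2 - x + 1 / 6) := by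
  have hn : ‖z‖ ≤ 1 := by
    rw [hz]; exact_mod_cast (norm_exp_ofReal_mul_I (2 * Real.pi * x)).le
  have h1 := hasSum_re (hasSum_Li (n := 2) (by norm_num) hn)
  have h2 := (hasSum_nat_add_iff' 1).mpr (hasSum_one_div_nat_pow_mul_cos (k := 1) one_ne_zero hx)
  have h3 := h1.unique (by
    refine hasSum_of_eq h2 fun k => ?_
    rw [hz, ← exp_nat_mul]
    have : ((k + 1 : ℕ) : ℂ) * (2 * Real.pi * x * I)
      = ((2 * Real.pi * (k + 1 : ℕ) * x : ℝ) : ℂ) * I := by push_cast; ring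
    rw [this, ← ofReal_natCast, ← ofReal_pow, div_ofReal_re, exp_ofReal_mul_I_re]
    ring)
  change _ = _ * bernoulliFun 2 x - _ at h3
  have hf : ((2 * 1).factorial : ℝ) = 2 := by norm_num [Nat.factorial]
  rw [h3, bernoulliFun_two, hf]
  simp only [Finset.sum_range_one, Nat.cast_zero]
  ring

/-- On the unit circle `Im Li₃` is the Fourier series of the Bernoulli polynomial `B₃`. -/
lemma Li_three_im_circle {x : ℝ} (hx : x ∈ Set.Icc (0 : ℝ) 1) {z : ℂ}
    (hz : z = exp (2 * Real.pi * x * I)) :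
    (Li 3 z).im = 2 * Real.pi ^ 3 / 3 * (x ^ 3 - 3 / 2 * x ^ 2 + 1 / 2 * x) := by
  have hn : ‖z‖ ≤ 1 := by
    rw [hz]; exact_mod_cast (norm_exp_ofReal_mul_I (2 * Real.pi * x)).le
  have h1 := hasSum_im (hasSum_Li (n := 3) (by norm_num) hn)
  have h2 := (hasSum_nat_add_iff' 1).mpr (hasSum_one_div_nat_pow_mul_sin (k := 1) one_ne_zero hx)
  have h3 := h1.unique (by
    refine hasSum_of_eq h2 fun k => ?_
    rw [hz, ← exp_nat_mul]
    have : ((k + 1 : ℕ) : ℂ) * (2 * Real.pi * x * I)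
      = ((2 * Real.pi * (k + 1 : ℕ) * x : ℝ) : ℂ) * I := by push_cast; ring
    rw [this, ← ofReal_natCast, ← ofReal_pow, div_ofReal_im, exp_ofReal_mul_I_im]
    ring)
  have hb : (Polynomial.map (algebraMap ℚ ℝ) (Polynomial.bernoulli (2 * 1 + 1))).eval x
      = x ^ 3 - 3 / 2 * x ^ 2 + 1 / 2 * x := by
    have h3 : bernoulli 3 = 0 := bernoulli_eq_zero_of_odd (by decide) (by norm_num)
    simp [Polynomial.bernoulli_def, Finset.sum_range_succ, bernoulli_one, bernoulli_two, h3,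
      Nat.choose]
    ring
  have hf : ((2 * 1 + 1).factorial : ℝ) = 6 := by norm_num [Nat.factorial]
  rw [h3, hb, hf]
  simp only [Finset.sum_range_one, Nat.cast_zero]
  ring

/-! ### The curve with real part one half -/

/-- The point `c` of the line `Re c = 1/2` with argument `θ`, for `|θ| < π/2`. -/
noncomputable def crv (θ : ℝ) : ℂ := (1 + Real.tan θ * I) / 2

/-- The conjugate of `c`, which is also `1 - c`. -/
noncomputable def crvConj (θ : ℝ) : ℂ := (1 - Real.tan θ * I) / 2

/-- The point `v = -c² / c̄`, of the same modulus as `c`. -/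
noncomputable def crvV (θ : ℝ) : ℂ := -(crv θ ^ 2 / crvConj θ)

/-- The logarithm of `|c|`, equal to `-log (2 cos θ)`. -/
noncomputable def ell (θ : ℝ) : ℝ := -Real.log (2 * Real.cos θ)

lemma crv_ne_zero (θ : ℝ) : crv θ ≠ 0 := by
  intro h
  have := congrArg re h
  norm_num [crv] at this

lemma crvConj_ne_zero (θ : ℝ) : crvConj θ ≠ 0 := by
  intro h
  have := congrArg re h
  norm_num [crvConj] at this

lemma crvV_ne_zero (θ : ℝ) : crvV θ ≠ 0 :=
  neg_ne_zero.mpr (div_ne_zero (pow_ne_zero _ (crv_ne_zero θ)) (crvConj_ne_zero θ))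

lemma conj_crv (θ : ℝ) : starRingEnd ℂ (crv θ) = crvConj θ := by
  simp only [crv, crvConj, sub_eq_add_neg, map_div₀, map_add, map_mul, map_one, conj_ofReal, conj_I,
    mul_neg, map_ofNat]

lemma norm_crv_sq (θ : ℝ) : ‖crv θ‖ ^ 2 = (1 + Real.tan θ ^ 2) / 4 := by
  rw [← normSq_eq_norm_sq, normSq_apply]
  simp [crv, -ofReal_tan]
  ring

lemma norm_crvV (θ : ℝ) : ‖crvV θ‖ = ‖crv θ‖ := by
  rw [crvV, norm_neg, norm_div, norm_pow, ← conj_crv, norm_conj, sq,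
    mul_div_cancel_right₀ _ (norm_ne_zero_iff.mpr (crv_ne_zero θ))]

lemma hasDerivAt_tan {θ : ℝ} (h : Real.cos θ ≠ 0) :
    HasDerivAt (fun t => (Real.tan t : ℂ)) (1 + (Real.tan θ : ℂ) ^ 2) θ := by
  refine (Real.hasDerivAt_tan h).ofReal_comp.congr_deriv ?_
  rw [← Real.inv_one_add_tan_sq h]
  push_cast
  rw [one_div, inv_inv]

lemma hasDerivAt_crv {θ : ℝ} (h : Real.cos θ ≠ 0) :
    HasDerivAt crv (crv θ * (Real.tan θ + I)) θ := by
  refine ((((hasDerivAt_tan h).mul_const I).const_add 1).div_const 2).congr_deriv ?_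
  rw [crv]
  linear_combination (-(Real.tan θ : ℂ) / 2) * I_sq

lemma hasDerivAt_crvConj {θ : ℝ} (h : Real.cos θ ≠ 0) :
    HasDerivAt crvConj (crvConj θ * (Real.tan θ - I)) θ := by
  refine ((((hasDerivAt_tan h).mul_const I).const_sub 1).div_const 2).congr_deriv ?_
  rw [crvConj]
  linear_combination (-(Real.tan θ : ℂ) / 2) * I_sq

lemma hasDerivAt_neg_crv {θ : ℝ} (h : Real.cos θ ≠ 0) :
    HasDerivAt (fun t => -crv t) (-crv θ * (Real.tan θ + I)) θ :=
  (hasDerivAt_crv h).neg.congr_deriv (by ring)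

lemma hasDerivAt_neg_crv_cube {θ : ℝ} (h : Real.cos θ ≠ 0) :
    HasDerivAt (fun t => -crv t ^ 3) (-crv θ ^ 3 * (3 * (Real.tan θ + I))) θ :=
  ((hasDerivAt_crv h).pow 3).neg.congr_deriv (by push_cast; ring)

lemma hasDerivAt_crvV {θ : ℝ} (h : Real.cos θ ≠ 0) :
    HasDerivAt crvV (crvV θ * (Real.tan θ + 3 * I)) θ := by
  refine (((hasDerivAt_crv h).pow 2).div (hasDerivAt_crvConj h)
    (crvConj_ne_zero θ)).neg.congr_deriv ?_
  have := crvConj_ne_zero θ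
  simp only [Pi.pow_apply, crvV]
  field_simp
  push_cast
  ring

lemma hasDerivAt_ell {θ : ℝ} (h : Real.cos θ ≠ 0) : HasDerivAt ell (Real.tan θ) θ := by
  refine (((Real.hasDerivAt_cos θ).const_mul 2).log (by simpa using h)).neg.congr_deriv ?_
  rw [Real.tan_eq_sin_div_cos]
  field_simp

lemma log_crvConj {θ : ℝ} (h : θ ∈ Set.Ioo 0 (Real.pi / 2)) :
    log (crvConj θ) = ell θ - θ * I := by
  have hc : 0 < Real.cos θ := Real.cos_pos_of_mem_Ioo ⟨by linarith [h.1, Real.pi_pos], h.2⟩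
  have hc' : cos (θ : ℂ) ≠ 0 := by exact_mod_cast hc.ne'
  have : crvConj θ = exp (ell θ - θ * I) := by
    have h1 : ((ell θ : ℝ) : ℂ) - θ * I = (ell θ : ℝ) + (-θ : ℂ) * I := by ring
    rw [h1, exp_add, exp_mul_I, ← ofReal_exp, ell, Real.exp_neg, Real.exp_log (by positivity),
      crvConj, Real.tan_eq_sin_div_cos, cos_neg, sin_neg]
    push_cast
    field_simp
    ring
  rw [this, log_exp]
  · simp; linarith [h.2, Real.pi_pos]
  · simp; linarith [h.1, Real.pi_pos]

/-- The real number `1 - c + c²`, for `c = crv θ`; it is positive when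
`tan² θ < 3`. -/
noncomputable def quad (θ : ℝ) : ℝ := (3 - Real.tan θ ^ 2) / 4

lemma log_one_sub_crvV {θ : ℝ} (h : θ ∈ Set.Ioo 0 (Real.pi / 2)) (hq : 0 < quad θ) :
    log (1 - crvV θ) = Real.log (quad θ) - (ell θ - θ * I) := by
  have h1 : 1 - crvV θ = (quad θ : ℝ) * (crvConj θ)⁻¹ := by
    have := crvConj_ne_zero θ
    rw [crvV, quad]
    field_simp
    rw [crv, crvConj]
    push_cast [-ofReal_tan]
    linear_combination ((Real.tan θ : ℂ) ^ 2 / 4) * I_sq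
  have ha : (crvConj θ).arg ≠ Real.pi := by
    rw [← log_im, log_crvConj h]
    simp
    linarith [h.1, Real.pi_pos]
  rw [h1, log_ofReal_mul hq (inv_ne_zero (crvConj_ne_zero θ)), log_inv _ ha, log_crvConj h]
  ring

lemma log_one_add_crv_cube {θ : ℝ} (hq : 0 < quad θ) :
    log (1 - -crv θ ^ 3) = Real.log (quad θ) + log (1 - -crv θ) := by
  have h1 : 1 - -crv θ ^ 3 = (quad θ : ℝ) * (1 - -crv θ) := by
    rw [crv, quad]
    push_cast [-ofReal_tan]
    linear_combination ((Real.tan θ : ℂ) ^ 2 / 4 + (Real.tan θ : ℂ) ^ 2 / 8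
      + (Real.tan θ : ℂ) ^ 3 * I / 8) * I_sq
  rw [h1, log_ofReal_mul hq]
  intro h0
  have := congrArg re h0
  norm_num [crv] at this

lemma log_one_sub_crv {θ : ℝ} (h : θ ∈ Set.Ioo 0 (Real.pi / 2)) :
    log (1 - crv θ) = ell θ - θ * I := by
  rw [← log_crvConj h]
  congr 1
  rw [crv, crvConj]
  ring

lemma tan_sq_lt {θ : ℝ} (h : θ ∈ Set.Ioo 0 (Real.pi / 3)) : Real.tan θ ^ 2 < 3 := by
  have h1 := Real.tan_pos_of_pos_of_lt_pi_div_two h.1 (by linarith [h.2, Real.pi_pos])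
  have h2 := Real.tan_lt_tan_of_lt_of_lt_pi_div_two (x := θ) (y := Real.pi / 3)
    (by linarith [h.1, Real.pi_pos]) (by linarith [Real.pi_pos]) h.2
  rw [Real.tan_pi_div_three] at h2
  nlinarith [Real.sq_sqrt (show (0 : ℝ) ≤ 3 by norm_num)]

lemma norm_crv_lt {θ : ℝ} (h : θ ∈ Set.Ioo 0 (Real.pi / 3)) : ‖crv θ‖ < 1 := by
  have := norm_crv_sq θ
  nlinarith [tan_sq_lt h, norm_nonneg (crv θ)]

lemma norm_crv_le {θ : ℝ} (h : θ ∈ Set.Ioc 0 (Real.pi / 3)) : ‖crv θ‖ ≤ 1 := by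
  rcases h.2.eq_or_lt with rfl | h2
  · have h1 := norm_crv_sq (Real.pi / 3)
    rw [Real.tan_pi_div_three, Real.sq_sqrt (by norm_num)] at h1
    nlinarith [norm_nonneg (crv (Real.pi / 3))]
  · exact (norm_crv_lt ⟨h.1, h2⟩).le

/-! ### Functional equations along the curve -/

/-- A function with zero derivative on `(0, π/3)`, continuous up to `π/3`, equals its value at
`π/3`, where the arguments of the polylogarithms reach the unit circle. -/
lemma eq_endpoint {f f' : ℝ → ℝ} (hf : ContinuousOn f (Set.Ioc 0 (Real.pi / 3)))
    (hd : ∀ t ∈ Set.Ioo 0 (Real.pi / 3), HasDerivAt f (f' t) t)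
    (h0 : ∀ t ∈ Set.Ioo 0 (Real.pi / 3), f' t = 0) {θ : ℝ} (h : θ ∈ Set.Ioc 0 (Real.pi / 3)) :
    f θ = f (Real.pi / 3) := by
  rcases h.2.eq_or_lt with h2 | h2
  · rw [h2]
  obtain ⟨c, hc, e⟩ := exists_hasDerivAt_eq_slope f f' h2
    (hf.mono fun x hx => ⟨h.1.trans_le hx.1, hx.2⟩)
    fun x hx => hd x ⟨h.1.trans hx.1, hx.2⟩
  rw [h0 c ⟨h.1.trans hc.1, hc.2⟩, eq_comm, div_eq_zero_iff] at e
  rcases e with e | e <;> linarith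

lemma cos_ne_zero_arc {θ : ℝ} (h : θ ∈ Set.Ioc 0 (Real.pi / 3)) : Real.cos θ ≠ 0 :=
  (Real.cos_pos_of_mem_Ioo ⟨by linarith [h.1, Real.pi_pos], by linarith [h.2, Real.pi_pos]⟩).ne'

lemma continuousOn_Li_arc {n : ℕ} (hn : 1 < n) {w : ℝ → ℂ}
    (hw : ∀ t, Real.cos t ≠ 0 → ContinuousAt w t)
    (h1 : ∀ t ∈ Set.Ioc 0 (Real.pi / 3), ‖w t‖ ≤ 1) :
    ContinuousOn (fun t => Li n (w t)) (Set.Ioc 0 (Real.pi / 3)) :=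
  (continuousOn_Li hn).comp (fun t ht => (hw t (cos_ne_zero_arc ht)).continuousWithinAt) h1

lemma continuousOn_Li_four {n : ℕ} (hn : 1 < n) :
    ContinuousOn (fun t => Li n (crvV t)) (Set.Ioc 0 (Real.pi / 3)) ∧
    ContinuousOn (fun t => Li n (-crv t ^ 3)) (Set.Ioc 0 (Real.pi / 3)) ∧
    ContinuousOn (fun t => Li n (-crv t)) (Set.Ioc 0 (Real.pi / 3)) ∧
    ContinuousOn (fun t => Li n (crv t)) (Set.Ioc 0 (Real.pi / 3)) := by
  refine ⟨continuousOn_Li_arc hn (fun t h => (hasDerivAt_crvV h).continuousAt) fun t ht => ?_,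
    continuousOn_Li_arc hn (fun t h => (hasDerivAt_neg_crv_cube h).continuousAt) fun t ht => ?_,
    continuousOn_Li_arc hn (fun t h => (hasDerivAt_neg_crv h).continuousAt) fun t ht => ?_,
    continuousOn_Li_arc hn (fun t h => (hasDerivAt_crv h).continuousAt) fun t ht => ?_⟩
  · rw [norm_crvV]; exact norm_crv_le ht
  · rw [norm_neg, norm_pow]; exact pow_le_one₀ (norm_nonneg _) (norm_crv_le ht)
  · rw [norm_neg]; exact norm_crv_le ht
  · exact norm_crv_le ht

lemma continuousOn_ell : ContinuousOn ell (Set.Ioc 0 (Real.pi / 3)) := fun _ ht =>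
  (hasDerivAt_ell (cos_ne_zero_arc ht)).continuousAt.continuousWithinAt

lemma hasDerivAt_Li_four (n : ℕ) {θ : ℝ} (h : θ ∈ Set.Ioo 0 (Real.pi / 3)) :
    HasDerivAt (fun t => Li (n + 1) (crvV t)) (Li n (crvV θ) * (Real.tan θ + 3 * I)) θ ∧
    HasDerivAt (fun t => Li (n + 1) (-crv t ^ 3))
      (Li n (-crv θ ^ 3) * (3 * (Real.tan θ + I))) θ ∧
    HasDerivAt (fun t => Li (n + 1) (-crv t)) (Li n (-crv θ) * (Real.tan θ + I)) θ ∧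
    HasDerivAt (fun t => Li (n + 1) (crv t)) (Li n (crv θ) * (Real.tan θ + I)) θ := by
  have hc := cos_ne_zero_arc ⟨h.1, h.2.le⟩
  have hn := norm_crv_lt h
  have h0 := crv_ne_zero θ
  refine ⟨hasDerivAt_Li_curve n (hasDerivAt_crvV hc) ?_ (crvV_ne_zero θ),
    hasDerivAt_Li_curve n (hasDerivAt_neg_crv_cube hc) ?_ (neg_ne_zero.mpr (pow_ne_zero _ h0)),
    hasDerivAt_Li_curve n (hasDerivAt_neg_crv hc) ?_ (neg_ne_zero.mpr h0),
    hasDerivAt_Li_curve n (hasDerivAt_crv hc) hn h0⟩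
  · rwa [norm_crvV]
  · rw [norm_neg, norm_pow]; exact pow_lt_one₀ (norm_nonneg _) hn (by norm_num)
  · rwa [norm_neg]

/-- Weight-one values. The value at `-c` is left as it is, since it cancels from all derivatives in
weight two. -/
lemma Li_one_four {θ : ℝ} (h : θ ∈ Set.Ioo 0 (Real.pi / 3)) :
    Li 1 (crvV θ) = ell θ - θ * I - Real.log (quad θ) ∧
    Li 1 (-crv θ ^ 3) = Li 1 (-crv θ) - Real.log (quad θ) ∧
    Li 1 (crv θ) = θ * I - ell θ := by
  have hn := norm_crv_lt h
  have hh : θ ∈ Set.Ioo 0 (Real.pi / 2) := ⟨h.1, by linarith [h.2, Real.pi_pos]⟩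
  have hq : 0 < quad θ := by
    rw [quad]; linarith [tan_sq_lt h]
  refine ⟨?_, ?_, ?_⟩
  · rw [Li_one (by rwa [norm_crvV]), log_one_sub_crvV hh hq]
    ring
  · rw [Li_one, Li_one (by rwa [norm_neg]), log_one_add_crv_cube hq]
    · ring
    · rw [norm_neg, norm_pow]; exact pow_lt_one₀ (norm_nonneg _) hn (by norm_num)
  · rw [Li_one hn, log_one_sub_crv hh]
    ring

/-! ### Values at the endpoint -/

lemma crv_end : crv (Real.pi / 3) = exp (2 * Real.pi * (1 / 6 : ℝ) * I) := by
  have : (2 * Real.pi * (1 / 6 : ℝ) * I : ℂ) = ((Real.pi / 3 : ℝ) : ℂ) * I := by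
    push_cast; ring
  rw [this, exp_mul_I, ← ofReal_cos, ← ofReal_sin, Real.cos_pi_div_three, Real.sin_pi_div_three,
    crv, Real.tan_pi_div_three]
  push_cast
  ring

lemma neg_crv_end : -crv (Real.pi / 3) = exp (2 * Real.pi * (2 / 3 : ℝ) * I) := by
  have : (2 * Real.pi * (2 / 3 : ℝ) * I : ℂ)
      = 2 * Real.pi * (1 / 6 : ℝ) * I + Real.pi * I := by
    push_cast; ring
  rw [this, exp_add, exp_pi_mul_I, ← crv_end]
  ring

lemma ofReal_sqrt_three_sq : ((√3 : ℝ) : ℂ) ^ 2 = 3 := by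
  exact_mod_cast Real.sq_sqrt (show (0 : ℝ) ≤ 3 by norm_num)

lemma crv_cube_end : -crv (Real.pi / 3) ^ 3 = 1 := by
  rw [neg_eq_iff_eq_neg, crv_end, ← exp_nat_mul, ← exp_pi_mul_I]
  congr 1
  push_cast
  ring

lemma crv_sq_end : crv (Real.pi / 3) ^ 2 = -crvConj (Real.pi / 3) := by
  rw [crv, crvConj, Real.tan_pi_div_three]
  linear_combination (I ^ 2 / 4) * ofReal_sqrt_three_sq + (3 / 4) * I_sq

lemma crvV_end : crvV (Real.pi / 3) = 1 := by
  rw [crvV, crv_sq_end, neg_div, neg_neg, div_self (crvConj_ne_zero _)]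

lemma ell_end : ell (Real.pi / 3) = 0 := by
  rw [ell, Real.cos_pi_div_three]
  norm_num

lemma one_eq_circle : (1 : ℂ) = exp (2 * Real.pi * (0 : ℝ) * I) := by simp

lemma Li_one_arg_im (n : ℕ) : (Li n 1).im = 0 := by
  rw [← conj_eq_iff_im, ← Li_conj, map_one]

/-! ### Weight two and weight three -/

lemma dilog_im {θ : ℝ} (h : θ ∈ Set.Ioc 0 (Real.pi / 3)) :
    3 * (Li 2 (crvV θ)).im - 3 * (Li 2 (-crv θ ^ 3)).im + 9 * (Li 2 (-crv θ)).im
      + 6 * (Li 2 (crv θ)).im = 3 * ell θ * θ := by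
  have key := eq_endpoint (θ := θ)
    (f := fun t => 3 * (Li 2 (crvV t)).im - 3 * (Li 2 (-crv t ^ 3)).im + 9 * (Li 2 (-crv t)).im
      + 6 * (Li 2 (crv t)).im - 3 * ell t * t)
    (f' := fun t => 3 * (Li 1 (crvV t) * (Real.tan t + 3 * I)).im
      - 3 * (Li 1 (-crv t ^ 3) * (3 * (Real.tan t + I))).im
      + 9 * (Li 1 (-crv t) * (Real.tan t + I)).im
      + 6 * (Li 1 (crv t) * (Real.tan t + I)).im - (3 * Real.tan t * t + 3 * ell t * 1))
    ?_ ?_ ?_ h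
  -- The constant vanishes by duplication at `c = exp (iπ/3)`, where `c² = -c̄`.
  · have hs := Li_sq 0 (norm_crv_le (θ := Real.pi / 3) ⟨by linarith [Real.pi_pos], le_rfl⟩)
    rw [crv_sq_end, ← conj_crv, ← map_neg, Li_conj] at hs
    have hs' := congrArg im hs
    simp only [crvV_end, crv_cube_end, ell_end, Li_one_arg_im] at key
    simp at hs'
    linarith
  · obtain ⟨h1, h2, h3, h4⟩ := continuousOn_Li_four (n := 2) (by norm_num)
    have := continuousOn_ell
    fun_prop
  · intro t ht
    obtain ⟨h1, h2, h3, h4⟩ := hasDerivAt_Li_four 1 ht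
    exact ((((hasDerivAt_im_curve h1).const_mul 3).sub ((hasDerivAt_im_curve h2).const_mul 3)).add
      ((hasDerivAt_im_curve h3).const_mul 9)).add ((hasDerivAt_im_curve h4).const_mul 6) |>.sub
      (((hasDerivAt_ell (cos_ne_zero_arc ⟨ht.1, ht.2.le⟩)).const_mul 3).mul (hasDerivAt_id t))
  · intro t ht
    obtain ⟨h1, h2, h3⟩ := Li_one_four ht
    simp only [h1, h2, h3]
    simp [-ofReal_tan]
    ring

lemma dilog_re {θ : ℝ} (h : θ ∈ Set.Ioc 0 (Real.pi / 3)) :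
    9 * (Li 2 (crvV θ)).re - 3 * (Li 2 (-crv θ ^ 3)).re + 9 * (Li 2 (-crv θ)).re
      + 6 * (Li 2 (crv θ)).re = 3 / 2 * ell θ ^ 2 + 21 / 2 * θ ^ 2 - Real.pi ^ 2 / 2 := by
  have key := eq_endpoint (θ := θ)
    (f := fun t => 9 * (Li 2 (crvV t)).re - 3 * (Li 2 (-crv t ^ 3)).re + 9 * (Li 2 (-crv t)).re
      + 6 * (Li 2 (crv t)).re - (3 / 2 * ell t ^ 2 + 21 / 2 * t ^ 2))
    (f' := fun t => 9 * (Li 1 (crvV t) * (Real.tan t + 3 * I)).re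
      - 3 * (Li 1 (-crv t ^ 3) * (3 * (Real.tan t + I))).re
      + 9 * (Li 1 (-crv t) * (Real.tan t + I)).re
      + 6 * (Li 1 (crv t) * (Real.tan t + I)).re - (3 * ell t * Real.tan t + 21 * t))
    ?_ ?_ ?_ h
  · have e1 := Li_two_re_circle (x := 0) (by norm_num) one_eq_circle
    have e2 := Li_two_re_circle (x := 2 / 3) (by norm_num) neg_crv_end
    have e3 := Li_two_re_circle (x := 1 / 6) (by norm_num) crv_end
    simp only [crvV_end, crv_cube_end, ell_end, e1, e2, e3] at key
    linarith
  · obtain ⟨h1, h2, h3, h4⟩ := continuousOn_Li_four (n := 2) (by norm_num)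
    have := continuousOn_ell
    fun_prop
  · intro t ht
    obtain ⟨h1, h2, h3, h4⟩ := hasDerivAt_Li_four 1 ht
    refine ((((hasDerivAt_re_curve h1).const_mul 9).sub ((hasDerivAt_re_curve h2).const_mul 3)).add
      ((hasDerivAt_re_curve h3).const_mul 9)).add ((hasDerivAt_re_curve h4).const_mul 6) |>.sub
      ((((hasDerivAt_ell (cos_ne_zero_arc ⟨ht.1, ht.2.le⟩)).pow 2).const_mul (3 / 2)).add
        ((hasDerivAt_pow 2 t).const_mul (21 / 2))) |>.congr_deriv ?_
    push_cast
    ring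
  · intro t ht
    obtain ⟨h1, h2, h3⟩ := Li_one_four ht
    simp only [h1, h2, h3]
    simp [-ofReal_tan]
    ring

/-- The functional equation of weight three. -/
lemma trilog_im {θ : ℝ} (h : θ ∈ Set.Ioc 0 (Real.pi / 3)) :
    3 * (Li 3 (crvV θ)).im - (Li 3 (-crv θ ^ 3)).im + 9 * (Li 3 (-crv θ)).im
      + 6 * (Li 3 (crv θ)).im
      = 3 / 2 * ell θ ^ 2 * θ + 7 / 2 * θ ^ 3 - Real.pi ^ 2 / 2 * θ := by
  have key := eq_endpoint (θ := θ)
    (f := fun t => 3 * (Li 3 (crvV t)).im - (Li 3 (-crv t ^ 3)).im + 9 * (Li 3 (-crv t)).im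
      + 6 * (Li 3 (crv t)).im - (3 / 2 * ell t ^ 2 * t + 7 / 2 * t ^ 3 - Real.pi ^ 2 / 2 * t))
    (f' := fun t => 3 * (Li 2 (crvV t) * (Real.tan t + 3 * I)).im
      - (Li 2 (-crv t ^ 3) * (3 * (Real.tan t + I))).im
      + 9 * (Li 2 (-crv t) * (Real.tan t + I)).im
      + 6 * (Li 2 (crv t) * (Real.tan t + I)).im
      - (3 * ell t * Real.tan t * t + 3 / 2 * ell t ^ 2 + 21 / 2 * t ^ 2 - Real.pi ^ 2 / 2))
    ?_ ?_ ?_ h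
  · have e2 := Li_three_im_circle (x := 2 / 3) (by norm_num) neg_crv_end
    have e3 := Li_three_im_circle (x := 1 / 6) (by norm_num) crv_end
    simp only [crvV_end, crv_cube_end, ell_end, Li_one_arg_im, e2, e3] at key
    linarith
  · obtain ⟨h1, h2, h3, h4⟩ := continuousOn_Li_four (n := 3) (by norm_num)
    have := continuousOn_ell
    fun_prop
  · intro t ht
    obtain ⟨h1, h2, h3, h4⟩ := hasDerivAt_Li_four 2 ht
    refine ((((hasDerivAt_im_curve h1).const_mul 3).sub (hasDerivAt_im_curve h2)).add
      ((hasDerivAt_im_curve h3).const_mul 9)).add ((hasDerivAt_im_curve h4).const_mul 6) |>.sub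
      ((((((hasDerivAt_ell (cos_ne_zero_arc ⟨ht.1, ht.2.le⟩)).pow 2).const_mul (3 / 2)).mul
        (hasDerivAt_id t)).add ((hasDerivAt_pow 3 t).const_mul (7 / 2))).sub
        ((hasDerivAt_id t).const_mul (Real.pi ^ 2 / 2))) |>.congr_deriv ?_
    simp only [Pi.pow_apply, id]
    push_cast
    ring
  · intro t ht
    have hP := dilog_im ⟨ht.1, ht.2.le⟩
    have hQ := dilog_re ⟨ht.1, ht.2.le⟩
    simp only [mul_im, add_re, add_im, ofReal_re, ofReal_im, mul_re, I_re, I_im, re_ofNat, im_ofNat]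
    linear_combination Real.tan t * hP + hQ

theorem trilog_ladder_beta3 :
    (8 / 3) * (Li 3 ((1 + I) / 2)).im - (4 / 9) * (Li 3 ((1 + I) / 4)).im
      + (Li 3 (-I / 2)).im + Real.pi * Real.log 2 ^ 2 / 24 = Real.pi ^ 3 / 32 := by
  have hθ : Real.pi / 4 ∈ Set.Ioc 0 (Real.pi / 3) := by
    constructor <;> linarith [Real.pi_pos]
  have key := trilog_im hθ
  have hc : crv (Real.pi / 4) = (1 + I) / 2 := by simp [crv, -ofReal_tan]
  have hv : crvV (Real.pi / 4) = starRingEnd ℂ ((1 + I) / 2) := by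
    rw [← hc, conj_crv, crvV, hc, neg_eq_iff_eq_neg, div_eq_iff (crvConj_ne_zero _), crvConj,
      Real.tan_pi_div_four]
    push_cast
    linear_combination (1 / 2) * I_sq
  have h3 : -((1 + I) / 2) ^ 3 = starRingEnd ℂ ((1 + I) / 4) := by
    simp only [map_div₀, map_add, map_one, conj_I, map_ofNat]
    linear_combination (-(3 + I) / 8) * I_sq
  have hl : ell (Real.pi / 4) = -(Real.log 2 / 2) := by
    rw [ell, Real.cos_pi_div_four, mul_div_cancel₀ _ (by norm_num), Real.log_sqrt (by norm_num)]
  have hs := Li_sq 1 (norm_crv_le hθ)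
  have h2 : ((1 + I) / 2) ^ 2 = starRingEnd ℂ (-I / 2) := by
    simp only [map_div₀, map_neg, conj_I, map_ofNat]
    linear_combination (1 / 4) * I_sq
  rw [hc, h2, Li_conj] at hs
  have hs' := congrArg im hs
  rw [hv, hc, h3, Li_conj, Li_conj, hl] at key
  norm_num at hs' key
  linarith
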